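/- Let c ∈ (0,1), assume k_c > 0 satisfies a(k_c) = c, m'(k_c) ≠ 0, and m(k) ≠ 0 for all real k ∉ {−k_c, k_c}, and let (Ψ_δ)_{δ>0} satisfy Assumption A with constant C_Ψ and I_δ = 0 for all δ > 0. Let κ > 1/2. Then there exists δ_κ > 0 such that the following holds for all 0 < δ < δ_κ: if R₁, R₂ ∈ W^{2,∞}(ℝ) and μ₁, μ₂ ∈ ℝ satisfy, for i = 1, 2, M R_i = A²(Ψ'_δ ∘ R_i) + μ_i, R_i(0) = 0, R_i(x) ≤ −δ for all x ≤ −δ^κ, and R_i(x) ≥ +δ for all x ≥ +δ^κ, then either R₁ = R₂ or there exist constants γ₊ ∈ ℝ and (α₊, β₊) ∈ ℝ² with (α₊, β₊) ≠ (0, 0) such that R₁(x) − R₂(x) − α₊(cos(k_c x) − 1) − β₊ sin(k_c x) − γ₊ → 0 as x → +∞. -/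

import Mathlib

open MeasureTheory Real Filter Topology

/-- The averaging operator `(A F)(x) = ∫_{x-1/2}^{x+1/2} F(s) ds`. -/
noncomputable def Aop (F : ℝ → ℝ) : ℝ → ℝ := fun x => ∫ s in (x - 1/2)..(x + 1/2), F s

/-- The operator `M F = A(A F) - c² F`. -/
noncomputable def Mop (c : ℝ) (F : ℝ → ℝ) : ℝ → ℝ := fun x => Aop (Aop F) x - c ^ 2 * F x

/-- Membership in `W^{2,∞}(ℝ)`. -/
def IsW2inf (S : ℝ → ℝ) : Prop :=
  Differentiable ℝ S ∧ (∃ C : ℝ, ∀ x, |S x| ≤ C ∧ |deriv S x| ≤ C) ∧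
    ∃ K : NNReal, LipschitzWith K (deriv S)

/-- Assumption A for the family `(Ψ_δ)_{δ>0}` with constant `C_Ψ`. -/
def AssumptionA (Ψ : ℝ → ℝ → ℝ) (CΨ : ℝ) : Prop :=
  0 < CΨ ∧ ∀ δ : ℝ, 0 < δ →
    Ψ δ 0 = 0 ∧ ContDiff ℝ 2 (Ψ δ) ∧
    (∀ r : ℝ, δ ≤ |r| → deriv (Ψ δ) r = Real.sign r) ∧
    (∀ r : ℝ, |deriv (Ψ δ) r| ≤ CΨ) ∧
    (∀ r : ℝ, |deriv (deriv (Ψ δ)) r| ≤ CΨ / δ)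

/-- The quantity `I_δ = ½ ∫_ℝ (Ψ'_δ(r) − sgn r) dr`. -/
noncomputable def Idelta (Ψ : ℝ → ℝ → ℝ) (δ : ℝ) : ℝ :=
  (1 / 2) * ∫ r : ℝ, (deriv (Ψ δ) r - Real.sign r)

/-- An unperturbed wave `R₀`: a `W^{2,∞}` solution of `M R₀ = A²(sgn ∘ R₀) + μ₀` with
`R₀(0) = 0` which leaves a neighbourhood of `0` monotonically and stays away from `0`. -/
def UnperturbedWave (c : ℝ) (R₀ : ℝ → ℝ) : Prop :=
  IsW2inf R₀ ∧ R₀ 0 = 0 ∧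
  (∃ μ₀ : ℝ, ∀ x, Mop c R₀ x = Aop (Aop (fun y => Real.sign (R₀ y))) x + μ₀) ∧
  ∃ x₀ r₀ d₀ : ℝ, 0 < x₀ ∧ 0 < r₀ ∧ 0 < d₀ ∧
    (∀ x, x₀ < x → r₀ < R₀ x) ∧ (∀ x, x < -x₀ → R₀ x < -r₀) ∧
    (∀ x, |x| < x₀ → d₀ < deriv R₀ x)

/-- `δ`-admissibility of a corrector `S` relative to `R₀`. -/
def Admissible (δ : ℝ) (R₀ S : ℝ → ℝ) : Prop :=
  IsW2inf S ∧ S 0 = 0 ∧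
  ∃ xm xp : ℝ, xm < 0 ∧ 0 < xp ∧
    R₀ xm + S xm = -δ ∧ R₀ xp + S xp = δ ∧
    (∀ x, x < xm → R₀ x + S x < -δ) ∧
    (∀ x, xp < x → δ < R₀ x + S x) ∧
    (∀ x, xm < x → x < xp →
      deriv R₀ 0 / 2 < deriv R₀ x + deriv S x ∧ deriv R₀ x + deriv S x < 2 * deriv R₀ 0)

/-- The nonlinear superposition operator `G(S)(x) = Ψ'_δ(R₀(x)+S(x)) − sgn(R₀(x))`. -/
noncomputable def Gop (Ψ : ℝ → ℝ → ℝ) (δ : ℝ) (R₀ S : ℝ → ℝ) : ℝ → ℝ :=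
  fun x => deriv (Ψ δ) (R₀ x + S x) - Real.sign (R₀ x)

/-- The symbol `a(k) = sin(k/2)/(k/2)`, with `a(0) = 1`. -/
noncomputable def symb (k : ℝ) : ℝ := if k = 0 then 1 else Real.sin (k / 2) / (k / 2)

/-- The symbol `m(k) = a(k)² - c²`. -/
noncomputable def msymb (c : ℝ) : ℝ → ℝ := fun k => (symb k) ^ 2 - c ^ 2


noncomputable def pBox : ℝ → ℝ := Set.indicator (Set.Ioc (-1/2 : ℝ) (1/2)) (fun _ => 1)

lemma pBox_int : Integrable pBox := by
  unfold pBox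
  rw [integrable_indicator_iff measurableSet_Ioc]
  exact integrableOn_const (by simp)

lemma pBox_mul (F : ℝ → ℝ) : ∫ t, pBox t * F t = ∫ t in (-1/2 : ℝ)..(1/2), F t := by
  rw [intervalIntegral.integral_of_le (by norm_num), ← integral_indicator measurableSet_Ioc]
  congr 1; ext t
  unfold pBox
  by_cases h : t ∈ Set.Ioc (-1/2 : ℝ) (1/2) <;> simp [Set.indicator, h]

lemma Aop_eq (F : ℝ → ℝ) (x : ℝ) : Aop F x = ∫ s in (-1/2 : ℝ)..(1/2), F (x + s) := by
  unfold Aop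
  rw [intervalIntegral.integral_comp_add_left]
  congr 1; ring

lemma Aop_eq' (F : ℝ → ℝ) (x : ℝ) : Aop F x = ∫ s in (-1/2 : ℝ)..(1/2), F (x - s) := by
  unfold Aop
  rw [intervalIntegral.integral_comp_sub_left]
  congr 1; ring

lemma Aop_box (F : ℝ → ℝ) (x : ℝ) : Aop F x = ∫ s, pBox s * F (x + s) := by
  rw [Aop_eq, pBox_mul]

lemma Aop_box' (F : ℝ → ℝ) (x : ℝ) : Aop F x = ∫ s, pBox s * F (x - s) := by
  rw [Aop_eq', pBox_mul (fun s => F (x - s))]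

lemma Aop_refl (F : ℝ → ℝ) (x y : ℝ) : Aop (fun z => F (x - z)) y = Aop F (x - y) := by
  rw [Aop_eq, Aop_eq']
  congr 1; ext s; congr 1; ring

lemma Aop_shift (F : ℝ → ℝ) (x y : ℝ) : Aop (fun z => F (z + x)) y = Aop F (y + x) := by
  rw [Aop_eq, Aop_eq]
  congr 1; ext s; congr 1; ring

lemma Aop_split (F : ℝ → ℝ) (hF : ∀ a b, IntervalIntegrable F volume a b) (x : ℝ) :
    Aop F x = (∫ s in (0:ℝ)..(x+1/2), F s) - ∫ s in (0:ℝ)..(x-1/2), F s := by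
  unfold Aop
  rw [intervalIntegral.integral_interval_sub_left (hF _ _) (hF _ _)]

lemma Aop_continuous (F : ℝ → ℝ) (hF : ∀ a b, IntervalIntegrable F volume a b) :
    Continuous (Aop F) := by
  have h := intervalIntegral.continuous_primitive hF 0
  have : Aop F = fun x => (∫ s in (0:ℝ)..(x+1/2), F s) - ∫ s in (0:ℝ)..(x-1/2), F s := by
    ext x; exact Aop_split F hF x
  rw [this]
  exact (h.comp (by fun_prop : Continuous fun x : ℝ => x + 1/2)).sub
    (h.comp (by fun_prop : Continuous fun x : ℝ => x - 1/2))

lemma Aop_cont_of_cont {F : ℝ → ℝ} (hF : Continuous F) : Continuous (Aop F) :=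
  Aop_continuous F fun a b => hF.intervalIntegrable a b

lemma Aop_cont_of_int {F : ℝ → ℝ} (hF : Integrable F) : Continuous (Aop F) :=
  Aop_continuous F fun a b => hF.intervalIntegrable

lemma Aop_hasDerivAt {F : ℝ → ℝ} (hF : Continuous F) (x : ℝ) :
    HasDerivAt (Aop F) (F (x + 1/2) - F (x - 1/2)) x := by
  have : Aop F = fun x => (∫ s in (0:ℝ)..(x+1/2), F s) - ∫ s in (0:ℝ)..(x-1/2), F s := by
    ext x; exact Aop_split F (fun a b => hF.intervalIntegrable a b) x
  rw [this]
  have h : ∀ y, HasDerivAt (fun y => ∫ s in (0:ℝ)..y, F s) (F y) y := fun y =>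
    intervalIntegral.integral_hasDerivAt_right (hF.intervalIntegrable _ _)
      (hF.stronglyMeasurableAtFilter _ _) hF.continuousAt
  have h1 := (h (x + 1/2)).comp_add_const x (1/2)
  have h2 := (h (x - 1/2)).comp_sub_const x (1/2)
  exact h1.sub h2

lemma Aop_bdd {F : ℝ → ℝ} {C : ℝ} (hF : ∀ x, |F x| ≤ C) (x : ℝ) : |Aop F x| ≤ C := by
  unfold Aop
  have := intervalIntegral.norm_integral_le_of_norm_le_const (a := x - 1/2) (b := x + 1/2)
    (f := F) (C := C) (fun y _ => hF y)
  have e : |x + 1/2 - (x - 1/2)| = 1 := by ring_nf; norm_num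
  rw [e, mul_one] at this
  exact this

lemma Aop_add {F G : ℝ → ℝ} (hF : Continuous F) (hG : Continuous G) :
    Aop (fun x => F x + G x) = fun x => Aop F x + Aop G x := by
  ext x; unfold Aop
  exact intervalIntegral.integral_add (hF.intervalIntegrable _ _) (hG.intervalIntegrable _ _)

lemma Aop_sub {F G : ℝ → ℝ} (hF : Continuous F) (hG : Continuous G) :
    Aop (fun x => F x - G x) = fun x => Aop F x - Aop G x := by
  ext x; unfold Aop
  exact intervalIntegral.integral_sub (hF.intervalIntegrable _ _) (hG.intervalIntegrable _ _)

lemma conv_integrand {F : ℝ → ℝ} (hF : Integrable F) :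
    Integrable (fun p : ℝ × ℝ => pBox p.2 * F (p.1 - p.2)) (volume.prod volume) := by
  simpa using pBox_int.convolution_integrand (ContinuousLinearMap.mul ℝ ℝ) hF

lemma Aop_int {F : ℝ → ℝ} (hF : Integrable F) : Integrable (Aop F) := by
  have := (conv_integrand hF).integral_prod_left
  refine this.congr (ae_of_all _ fun x => ?_)
  simp only
  rw [Aop_box']

lemma Aop_symm {F G : ℝ → ℝ} (hF : Integrable F) (hG : Continuous G) {C : ℝ}
    (hC : ∀ x, |G x| ≤ C) : ∫ x, Aop F x * G x = ∫ x, F x * Aop G x := by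
  have i1 : Integrable (fun p : ℝ × ℝ => G p.1 * (pBox p.2 * F (p.1 - p.2)))
      (volume.prod volume) :=
    (conv_integrand hF).bdd_mul (c := C) (hG.comp continuous_fst).aestronglyMeasurable
      (ae_of_all _ fun p => hC _)
  have i2 : Integrable (fun p : ℝ × ℝ => G (p.1 + p.2) * (F p.1 * pBox p.2))
      (volume.prod volume) :=
    (hF.mul_prod pBox_int).bdd_mul (c := C)
      (hG.comp (continuous_fst.add continuous_snd)).aestronglyMeasurable
      (ae_of_all _ fun p => hC _)
  calc ∫ x, Aop F x * G x = ∫ x, ∫ t, G x * (pBox t * F (x - t)) := by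
        congr 1; ext x; rw [integral_const_mul, Aop_box', mul_comm]
    _ = ∫ t, ∫ x, G x * (pBox t * F (x - t)) := integral_integral_swap i1
    _ = ∫ t, ∫ x, G (x + t) * (F x * pBox t) := by
        congr 1; ext t
        rw [← integral_add_right_eq_self (fun x => G x * (pBox t * F (x - t))) t]
        congr 1; ext x; simp only [add_sub_cancel_right]; ring
    _ = ∫ x, ∫ t, G (x + t) * (F x * pBox t) := (integral_integral_swap i2).symm
    _ = ∫ x, F x * Aop G x := by
        congr 1; ext x
        rw [Aop_box, ← integral_const_mul]
        congr 1; ext t; ring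

lemma Aop_L1 {F : ℝ → ℝ} (hF : Integrable F) : ∫ x, |Aop F x| ≤ ∫ x, |F x| := by
  have h1 : ∫ x, |Aop F x| ≤ ∫ x, Aop (fun y => |F y|) x := by
    refine integral_mono (Aop_int hF).norm (Aop_int hF.norm) fun x => ?_
    unfold Aop
    exact intervalIntegral.abs_integral_le_integral_abs (by linarith)
  have h2 := Aop_symm (G := fun _ => (1:ℝ)) hF.norm continuous_const (C := 1) (by simp)
  have h3 : Aop (fun _ => (1:ℝ)) = fun _ => 1 := by
    ext x; simp [Aop]; norm_num
  rw [h3] at h2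
  simp only [mul_one, Real.norm_eq_abs] at h2
  linarith

/-- convolution version of symmetry -/
lemma Aop_conv {F G : ℝ → ℝ} (hF : Integrable F) (hG : Continuous G) {C : ℝ}
    (hC : ∀ x, |G x| ≤ C) (x : ℝ) :
    ∫ y, Aop F y * G (x - y) = ∫ y, F y * Aop G (x - y) := by
  rw [Aop_symm (G := fun y => G (x - y)) hF (by fun_prop) (fun y => hC _)]
  congr 1; ext y
  congr 1
  exact Aop_refl G x y

lemma Aop2_conv {F G : ℝ → ℝ} (hF : Integrable F) (hG : Continuous G) {C : ℝ}
    (hC : ∀ x, |G x| ≤ C) (x : ℝ) :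
    ∫ y, Aop (Aop F) y * G (x - y) = ∫ y, F y * Aop (Aop G) (x - y) := by
  rw [Aop_conv (Aop_int hF) hG hC, Aop_conv hF (Aop_cont_of_cont hG) (Aop_bdd hC)]

lemma tent_conv {G : ℝ → ℝ} (hG : Continuous G) {C : ℝ}
    (hC : ∀ x, |G x| ≤ C) (x : ℝ) :
    ∫ y, Aop pBox y * G (x - y) = Aop (Aop G) x := by
  rw [Aop_conv pBox_int hG hC, Aop_box']

lemma symb_neg (k : ℝ) : symb (-k) = symb k := by
  unfold symb; simp [neg_div, div_neg]

lemma symb_sq (k : ℝ) : k ^ 2 * symb k ^ 2 = 2 - 2 * Real.cos k := by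
  unfold symb
  split_ifs with h
  · simp [h]
  · have h1 : Real.cos k = 1 - 2 * Real.sin (k/2) ^ 2 := by
      have h2 := Real.sin_sq_add_cos_sq (k/2)
      have h3 := Real.cos_two_mul (k/2)
      rw [show 2 * (k/2) = k by ring] at h3
      linarith
    rw [h1]
    field_simp
    ring

lemma Aop_cos (k : ℝ) : Aop (fun y => Real.cos (k * y)) = fun x => symb k * Real.cos (k * x) := by
  ext x
  unfold Aop symb
  split_ifs with h
  · simp [h]; norm_num
  · rw [intervalIntegral.integral_comp_mul_left _ h, integral_cos,
      show k * (x + 1/2) = k * x + k/2 by ring, show k * (x - 1/2) = k * x - k/2 by ring,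
      Real.sin_add, Real.sin_sub, smul_eq_mul]
    field_simp
    ring

lemma Aop_sin (k : ℝ) : Aop (fun y => Real.sin (k * y)) = fun x => symb k * Real.sin (k * x) := by
  ext x
  unfold Aop symb
  split_ifs with h
  · simp [h]
  · rw [intervalIntegral.integral_comp_mul_left _ h, integral_sin,
      show k * (x + 1/2) = k * x + k/2 by ring, show k * (x - 1/2) = k * x - k/2 by ring,
      Real.cos_add, Real.cos_sub, smul_eq_mul]
    field_simp
    ring

lemma int_cos {F : ℝ → ℝ} (hF : Integrable F) (k : ℝ) :
    ∫ x, Aop F x * Real.cos (k * x) = symb k * ∫ x, F x * Real.cos (k * x) := by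
  rw [Aop_symm (G := fun y => Real.cos (k * y)) hF (by fun_prop) (fun y => Real.abs_cos_le_one _),
    Aop_cos, ← integral_const_mul]
  congr 1; ext x; ring

lemma int_sin {F : ℝ → ℝ} (hF : Integrable F) (k : ℝ) :
    ∫ x, Aop F x * Real.sin (k * x) = symb k * ∫ x, F x * Real.sin (k * x) := by
  rw [Aop_symm (G := fun y => Real.sin (k * y)) hF (by fun_prop) (fun y => Real.abs_sin_le_one _),
    Aop_sin, ← integral_const_mul]
  congr 1; ext x; ring

lemma tent_cos (k : ℝ) : ∫ x, Aop pBox x * Real.cos (k * x) = symb k ^ 2 := by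
  rw [int_cos pBox_int]
  have : ∫ x, pBox x * Real.cos (k * x) = symb k := by
    have h := Aop_box (fun y => Real.cos (k * y)) 0
    rw [Aop_cos] at h
    simpa using h.symm
  rw [this]; ring

lemma tent_sin (k : ℝ) : ∫ x, Aop pBox x * Real.sin (k * x) = 0 := by
  rw [int_sin pBox_int]
  have : ∫ x, pBox x * Real.sin (k * x) = 0 := by
    have h := Aop_box (fun y => Real.sin (k * y)) 0
    rw [Aop_sin] at h
    simpa using h.symm
  rw [this]; ring

lemma int_mul_bdd {F G : ℝ → ℝ} (hF : Integrable F) (hG : Continuous G) {C : ℝ}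
    (hC : ∀ x, |G x| ≤ C) : Integrable (fun x => F x * G x) :=
  hF.mul_bdd (c := C) hG.aestronglyMeasurable (ae_of_all _ fun p => hC _)

lemma int_mul_cos {F : ℝ → ℝ} (hF : Integrable F) (k : ℝ) :
    Integrable (fun x => F x * Real.cos (k * x)) :=
  int_mul_bdd hF (by fun_prop) (fun y => Real.abs_cos_le_one _)

lemma int_mul_sin {F : ℝ → ℝ} (hF : Integrable F) (k : ℝ) :
    Integrable (fun x => F x * Real.sin (k * x)) :=
  int_mul_bdd hF (by fun_prop) (fun y => Real.abs_sin_le_one _)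

lemma shift_cos {F : ℝ → ℝ} (hF : Integrable F) (k t : ℝ) :
    ∫ x, F (x + t) * Real.cos (k * x) =
      Real.cos (k * t) * (∫ x, F x * Real.cos (k * x)) +
      Real.sin (k * t) * (∫ x, F x * Real.sin (k * x)) := by
  rw [← integral_sub_right_eq_self _ t, ← integral_const_mul, ← integral_const_mul,
    ← integral_add ((int_mul_cos hF k).const_mul _) ((int_mul_sin hF k).const_mul _)]
  congr 1; ext x
  simp only [sub_add_cancel, mul_sub, Real.cos_sub]
  ring

lemma shift_sin {F : ℝ → ℝ} (hF : Integrable F) (k t : ℝ) :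
    ∫ x, F (x + t) * Real.sin (k * x) =
      Real.cos (k * t) * (∫ x, F x * Real.sin (k * x)) -
      Real.sin (k * t) * (∫ x, F x * Real.cos (k * x)) := by
  rw [← integral_sub_right_eq_self _ t, ← integral_const_mul, ← integral_const_mul,
    ← integral_sub ((int_mul_sin hF k).const_mul _) ((int_mul_cos hF k).const_mul _)]
  congr 1; ext x
  simp only [sub_add_cancel, mul_sub, Real.sin_sub]
  ring

/-- The combination `p F + q ΔF` with unit second difference. -/
noncomputable def pComb (p q : ℝ) (F : ℝ → ℝ) : ℝ → ℝ := fun x =>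
  p * F x + q * (F (x + 1) + F (x + (-1)) - 2 * F x)

lemma pComb_int {p q : ℝ} {F : ℝ → ℝ} (hF : Integrable F) : Integrable (pComb p q F) :=
  (hF.const_mul p).add ((((hF.comp_add_right 1).add (hF.comp_add_right (-1))).sub
    (hF.const_mul 2)).const_mul q)

lemma pComb_cont {p q : ℝ} {F : ℝ → ℝ} (hF : Continuous F) : Continuous (pComb p q F) := by
  unfold pComb; fun_prop

lemma pComb_L1 {p q : ℝ} {F : ℝ → ℝ} (hF : Integrable F) :
    ∫ x, |pComb p q F x| ≤ (|p| + 4 * |q|) * ∫ x, |F x| := by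
  have i0 := hF.norm
  have i1 := (hF.comp_add_right 1).norm
  have i2 := (hF.comp_add_right (-1)).norm
  simp only [Real.norm_eq_abs] at i0 i1 i2
  have h : ∫ x, |pComb p q F x| ≤
      ∫ x, (|p| * |F x| + |q| * (|F (x + 1)| + |F (x + (-1))| + 2 * |F x|)) := by
    refine integral_mono (pComb_int hF).norm ((i0.const_mul _).add (((i1.add i2).add
      (i0.const_mul 2)).const_mul _)) fun x => ?_
    simp only [pComb, Real.norm_eq_abs]
    refine (abs_add_le _ _).trans ?_
    rw [abs_mul, abs_mul]
    gcongr
    refine (abs_sub _ _).trans ?_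
    rw [abs_mul, abs_two]
    gcongr
    exact abs_add_le _ _
  have i3 : Integrable (fun x => |F (x + 1)| + |F (x + (-1))|) := i1.add i2
  have i4 : Integrable (fun x => |F (x + 1)| + |F (x + (-1))| + 2 * |F x|) :=
    i3.add (i0.const_mul 2)
  rw [integral_add (i0.const_mul _) (i4.const_mul _),
    integral_const_mul, integral_const_mul, integral_add i3 (i0.const_mul 2),
    integral_add i1 i2, integral_const_mul, integral_add_right_eq_self (fun x => |F x|),
    integral_add_right_eq_self (fun x => |F x|)] at h
  linarith

lemma pComb_mul {p q : ℝ} {F G : ℝ → ℝ} (hF : Integrable F) (hG : Continuous G) {C : ℝ}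
    (hC : ∀ x, |G x| ≤ C) :
    ∫ x, pComb p q F x * G x = p * (∫ x, F x * G x) +
      q * ((∫ x, F (x + 1) * G x) + (∫ x, F (x + (-1)) * G x) - 2 * ∫ x, F x * G x) := by
  have i0 := int_mul_bdd hF hG hC
  have i1 := int_mul_bdd (hF.comp_add_right 1) hG hC
  have i2 := int_mul_bdd (hF.comp_add_right (-1)) hG hC
  have i3 : Integrable (fun x => F (x + 1) * G x + F (x + (-1)) * G x) := i1.add i2
  have i4 : Integrable (fun x => F (x + 1) * G x + F (x + (-1)) * G x - 2 * (F x * G x)) :=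
    i3.sub (i0.const_mul 2)
  rw [← integral_const_mul, ← integral_add i1 i2, ← integral_const_mul,
    ← integral_sub i3 (i0.const_mul 2), ← integral_const_mul,
    ← integral_add (i0.const_mul p) (i4.const_mul q)]
  congr 1; ext x
  simp only [pComb]; ring

lemma pComb_tent_cos (p q k : ℝ) : ∫ x, pComb p q (Aop pBox) x * Real.cos (k * x) =
    symb k ^ 2 * (p - q * (2 - 2 * Real.cos k)) := by
  have hi := Aop_int pBox_int
  rw [pComb_mul hi (by fun_prop) (fun y => Real.abs_cos_le_one _), shift_cos hi, shift_cos hi,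
    tent_cos, tent_sin]
  simp
  ring

lemma pComb_tent_sin (p q k : ℝ) : ∫ x, pComb p q (Aop pBox) x * Real.sin (k * x) = 0 := by
  have hi := Aop_int pBox_int
  rw [pComb_mul hi (by fun_prop) (fun y => Real.abs_sin_le_one _), shift_sin hi, shift_sin hi,
    tent_cos, tent_sin]
  simp

lemma pComb_tent_conv {p q : ℝ} {G : ℝ → ℝ} (hG : Continuous G) {C : ℝ}
    (hC : ∀ x, |G x| ≤ C) (x : ℝ) :
    ∫ y, pComb p q (Aop pBox) y * G (x - y) = pComb p q (Aop (Aop G)) x := by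
  have hi := Aop_int pBox_int
  have e : ∀ t : ℝ, ∫ y, Aop pBox (y + t) * G (x - y) = Aop (Aop G) (x + t) := by
    intro t
    rw [← tent_conv hG hC, ← integral_sub_right_eq_self _ t]
    congr 1; ext y
    rw [sub_add_cancel]; congr 2; ring
  rw [pComb_mul hi (G := fun y => G (x - y)) (by fun_prop) (fun y => hC _), e, e,
    tent_conv hG hC, pComb]


open FourierTransform in
lemma fourier_re_im {F : ℝ → ℝ} (hF : Integrable F) (w : ℝ) :
    𝓕 (fun x => (F x : ℂ)) w = ((∫ x, F x * Real.cos (2 * π * w * x) : ℝ) : ℂ)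
      - Complex.I * ((∫ x, F x * Real.sin (2 * π * w * x) : ℝ) : ℂ) := by
  rw [Real.fourier_real_eq_integral_exp_smul, ← integral_complex_ofReal, ← integral_complex_ofReal,
    ← integral_const_mul, ← integral_sub (int_mul_cos hF _).ofReal
      ((int_mul_sin hF _).ofReal.const_mul _)]
  congr 1; ext x
  rw [show ((-2 * π * x * w : ℝ) : ℂ) * Complex.I = ((-(2 * π * w * x) : ℝ) : ℂ) * Complex.I by
    push_cast; ring, Complex.exp_mul_I, ← Complex.ofReal_cos, ← Complex.ofReal_sin,
    Real.cos_neg, Real.sin_neg, smul_eq_mul]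
  push_cast; ring

open FourierTransform in
lemma fourier_unique {F : ℝ → ℝ} (hF : Integrable F) (hc : Continuous F)
    (h1 : ∀ k, ∫ x, F x * Real.cos (k * x) = 0) (h2 : ∀ k, ∫ x, F x * Real.sin (k * x) = 0) (x : ℝ) :
    F x = 0 := by
  have e : 𝓕 (fun x => (F x : ℂ)) = fun _ => 0 := by
    ext w
    rw [fourier_re_im hF, h1, h2]; simp
  have := Continuous.fourierInv_fourier_eq (f := fun x => (F x : ℂ)) (by fun_prop) hF.ofReal
    (by rw [e]; exact integrable_zero _ _ _)
  have h3 := congrFun this x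
  rw [e, Real.fourierInv_eq] at h3
  simpa using h3.symm

open FourierTransform in
lemma fourier_exists {h h1 h2 : ℝ → ℝ} (he : ∀ k, h (-k) = h k)
    (d1 : ∀ k, HasDerivAt h (h1 k) k) (d2 : ∀ k, HasDerivAt h1 (h2 k) k)
    (i0 : Integrable h) (i1 : Integrable h1) (i2 : Integrable h2) :
    ∃ v : ℝ → ℝ, Continuous v ∧ Integrable v ∧ (∀ k, ∫ x, v x * Real.cos (k * x) = h k) ∧
      (∀ k, ∫ x, v x * Real.sin (k * x) = 0) := by
  have hp : (2 * π) ≠ 0 := by positivity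
  set H : ℝ → ℂ := fun ξ => (h (2 * π * ξ) : ℂ) with hH
  have I0' : Integrable (fun ξ => h (2 * π * ξ)) := i0.comp_mul_left' hp
  have I0 : Integrable H := I0'.ofReal
  have D1 : ∀ k, HasDerivAt H ((2 * π * h1 (2 * π * k) : ℝ) : ℂ) k := by
    intro k
    have := ((d1 (2 * π * k)).comp k ((hasDerivAt_id k).const_mul (2 * π))).ofReal_comp
    convert! this using 2
    simp; ring
  have D2 : ∀ k, HasDerivAt (fun k => ((2 * π * h1 (2 * π * k) : ℝ) : ℂ))
      ((2 * π * (2 * π) * h2 (2 * π * k) : ℝ) : ℂ) k := by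
    intro k
    have := (((d2 (2 * π * k)).comp k ((hasDerivAt_id k).const_mul (2 * π))).const_mul
      (2 * π)).ofReal_comp
    convert! this using 2
    simp; ring
  have E1 : deriv H = fun k => ((2 * π * h1 (2 * π * k) : ℝ) : ℂ) := by
    ext k; exact (D1 k).deriv
  have E2 : deriv (deriv H) = fun k => ((2 * π * (2 * π) * h2 (2 * π * k) : ℝ) : ℂ) := by
    rw [E1]; ext k; exact (D2 k).deriv
  have I1 : Integrable (deriv H) := by
    rw [E1]; exact ((i1.comp_mul_left' hp).const_mul _).ofReal
  have I2 : Integrable (deriv (deriv H)) := by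
    rw [E2]; exact ((i2.comp_mul_left' hp).const_mul _).ofReal
  have F1 := Real.fourier_deriv I0 (fun k => (D1 k).differentiableAt) I1
  have F2 := Real.fourier_deriv I1 (by rw [E1]; exact fun k => (D2 k).differentiableAt) I2
  set w : ℝ → ℂ := 𝓕 H with hw
  have hwc : Continuous w :=
    VectorFourier.fourierIntegral_continuous Real.continuous_fourierChar
      (by exact continuous_inner) I0
  have bd : ∀ (f : ℝ → ℂ) (x : ℝ), ‖𝓕 f x‖ ≤ ∫ y, ‖f y‖ := by
    intro f x
    rw [Real.fourier_eq]
    refine (norm_integral_le_integral_norm _).trans (le_of_eq ?_)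
    congr 1; ext y; simp
  have hdec : ∀ x, ‖w x‖ ≤ ((∫ y, ‖H y‖) + ∫ y, ‖deriv (deriv H) y‖) * (1 + x ^ 2)⁻¹ := by
    intro x
    have b0 := bd H x
    have b2 := bd (deriv (deriv H)) x
    rw [F2] at b2
    simp only [F1, smul_eq_mul, norm_mul, Complex.norm_I, Complex.norm_real, Complex.norm_ofNat,
      Real.norm_eq_abs, abs_of_pos Real.pi_pos] at b2
    rw [← div_eq_mul_inv, le_div_iff₀ (by positivity)]
    have h3 : 0 ≤ ‖w x‖ := norm_nonneg _
    have h4 : 2 * π * 1 * |x| * (2 * π * 1 * |x| * ‖w x‖) = (2 * π) ^ 2 * (x ^ 2 * ‖w x‖) := by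
      rw [← sq_abs x]; ring
    rw [h4] at b2
    have h5 : x ^ 2 * ‖w x‖ ≤ (2 * π) ^ 2 * (x ^ 2 * ‖w x‖) := by
      have : 1 ≤ (2 * π) ^ 2 := by nlinarith [Real.pi_gt_three]
      exact le_mul_of_one_le_left (by positivity) this
    have b0' : ‖w x‖ ≤ ∫ y, ‖H y‖ := b0
    nlinarith
  have hwi : Integrable w :=
    Integrable.mono' (integrable_inv_one_add_sq.const_mul _) hwc.aestronglyMeasurable
      (ae_of_all _ hdec)
  have hs : ∀ k : ℝ, ∫ x, h (2 * π * x) * Real.sin (k * x) = 0 := by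
    intro k
    have := integral_neg_eq_self (fun x => h (2 * π * x) * Real.sin (k * x)) volume
    simp only [mul_neg, he, Real.sin_neg, integral_neg] at this
    linarith
  set v : ℝ → ℝ := fun x => ∫ ξ, h (2 * π * ξ) * Real.cos (2 * π * x * ξ) with hv
  have wv : w = fun x => (v x : ℂ) := by
    ext x
    rw [hw, hH, fourier_re_im I0', hs]
    simp [hv]
  have hvw : v = fun x => (w x).re := by rw [wv]; simp
  have hvi : Integrable v := by rw [hvw]; exact hwi.re
  have hvc : Continuous v := by rw [hvw]; exact Complex.continuous_re.comp hwc
  have inv : 𝓕⁻ (𝓕 H) = H :=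
    Continuous.fourierInv_fourier_eq (continuous_iff_continuousAt.2 fun k => (D1 k).continuousAt)
      I0 hwi
  have key : ∀ k : ℝ, (h k : ℂ) = ((∫ x, v x * Real.cos (k * x) : ℝ) : ℂ)
      + Complex.I * ((∫ x, v x * Real.sin (k * x) : ℝ) : ℂ) := by
    intro k
    have e := congrFun inv (k / (2 * π))
    rw [Real.fourierInv_eq_fourier_neg, ← hw, wv, fourier_re_im hvi] at e
    have e1 : 2 * π * (k / (2 * π)) = k := by field_simp
    have e2 : 2 * π * -(k / (2 * π)) = -k := by field_simp
    simp only [hH, e1, e2, neg_mul, Real.cos_neg, Real.sin_neg, mul_neg, integral_neg] at e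
    rw [← e]; push_cast; ring
  refine ⟨v, hvc, hvi, fun k => ?_, fun k => ?_⟩
  · have := congrArg Complex.re (key k)
    simpa using this.symm
  · have := congrArg Complex.im (key k)
    simpa using this.symm


/-- `f` and its first two derivatives decay like `|k|⁻ʲ` at infinity. -/
def PDec (j : ℕ) (f : ℝ → ℝ) : Prop :=
  ∃ (K C : ℝ) (f1 f2 : ℝ → ℝ), 1 ≤ K ∧ 0 ≤ C ∧ ∀ k, K < |k| →
    HasDerivAt f (f1 k) k ∧ HasDerivAt f1 (f2 k) k ∧
    |f k| ≤ C * (|k|⁻¹) ^ j ∧ |f1 k| ≤ C * (|k|⁻¹) ^ j ∧ |f2 k| ≤ C * (|k|⁻¹) ^ j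

lemma open_far (K : ℝ) {k : ℝ} (hk : K < |k|) : ∀ᶠ y in 𝓝 k, K < |y| :=
  (isOpen_lt continuous_const continuous_abs).mem_nhds hk

lemma PDec.congr {j : ℕ} {f g : ℝ → ℝ} (hf : PDec j f) (K0 : ℝ)
    (h : ∀ k, K0 < |k| → g k = f k) : PDec j g := by
  obtain ⟨K, C, f1, f2, hK, hC, H⟩ := hf
  refine ⟨max K K0, C, f1, f2, le_max_of_le_left hK, hC, fun k hk => ?_⟩
  have hk1 := (le_max_left _ _).trans_lt hk
  have hk2 := (le_max_right _ _).trans_lt hk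
  obtain ⟨a, b, c, d, e⟩ := H k hk1
  refine ⟨a.congr_of_eventuallyEq ?_, b, by rw [h k hk2]; exact c, d, e⟩
  filter_upwards [open_far K0 hk2] with y hy using h y hy

lemma PDec.mono {j : ℕ} {f : ℝ → ℝ} (hf : PDec j f) : PDec 0 f := by
  obtain ⟨K, C, f1, f2, hK, hC, H⟩ := hf
  refine ⟨K, C, f1, f2, hK, hC, fun k hk => ?_⟩
  obtain ⟨a, b, c, d, e⟩ := H k hk
  have : (|k|⁻¹) ^ j ≤ (|k|⁻¹) ^ 0 := by
    rw [pow_zero]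
    exact pow_le_one₀ (by positivity) (inv_le_one_of_one_le₀ (by linarith))
  have h2 := mul_le_mul_of_nonneg_left this hC
  exact ⟨a, b, c.trans h2, d.trans h2, e.trans h2⟩

lemma PDec.add {j : ℕ} {f g : ℝ → ℝ} (hf : PDec j f) (hg : PDec j g) :
    PDec j (fun k => f k + g k) := by
  obtain ⟨K, C, f1, f2, hK, hC, H⟩ := hf
  obtain ⟨K', C', g1, g2, hK', hC', H'⟩ := hg
  refine ⟨max K K', C + C', fun k => f1 k + g1 k, fun k => f2 k + g2 k, le_max_of_le_left hK,
    by positivity, fun k hk => ?_⟩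
  obtain ⟨a, b, c, d, e⟩ := H k ((le_max_left _ _).trans_lt hk)
  obtain ⟨a', b', c', d', e'⟩ := H' k ((le_max_right _ _).trans_lt hk)
  refine ⟨a.add a', b.add b', ?_, ?_, ?_⟩ <;> rw [add_mul] <;>
    refine (abs_add_le _ _).trans (add_le_add ?_ ?_) <;> assumption

lemma PDec.mul {i j : ℕ} {f g : ℝ → ℝ} (hf : PDec i f) (hg : PDec j g) :
    PDec (i + j) (fun k => f k * g k) := by
  obtain ⟨K, C, f1, f2, hK, hC, H⟩ := hf
  obtain ⟨K', C', g1, g2, hK', hC', H'⟩ := hg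
  refine ⟨max K K', 4 * (C * C'), fun k => f1 k * g k + f k * g1 k,
    fun k => (f2 k * g k + f1 k * g1 k) + (f1 k * g1 k + f k * g2 k), le_max_of_le_left hK,
    by positivity, fun k hk => ?_⟩
  obtain ⟨a, b, c, d, e⟩ := H k ((le_max_left _ _).trans_lt hk)
  obtain ⟨a', b', c', d', e'⟩ := H' k ((le_max_right _ _).trans_lt hk)
  have key : ∀ u w : ℝ, |u| ≤ C * (|k|⁻¹) ^ i → |w| ≤ C' * (|k|⁻¹) ^ j →
      |u * w| ≤ C * C' * (|k|⁻¹) ^ (i + j) := by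
    intro u w hu hw
    rw [abs_mul, pow_add]
    calc |u| * |w| ≤ (C * (|k|⁻¹) ^ i) * (C' * (|k|⁻¹) ^ j) :=
          mul_le_mul hu hw (abs_nonneg _) (by positivity)
      _ = _ := by ring
  have hp : 0 ≤ C * C' * (|k|⁻¹) ^ (i + j) := by positivity
  refine ⟨a.mul a', (b.mul a').add (a.mul b'), ?_, ?_, ?_⟩
  · have := key _ _ c c'
    linarith
  · have h1 := key _ _ d c'
    have h2 := key _ _ c d'
    have := abs_add_le (f1 k * g k) (f k * g1 k)
    linarith
  · have h1 := key _ _ e c'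
    have h2 := key _ _ d d'
    have h3 := key _ _ c e'
    have t1 := abs_add_le (f2 k * g k + f1 k * g1 k) (f1 k * g1 k + f k * g2 k)
    have t2 := abs_add_le (f2 k * g k) (f1 k * g1 k)
    have t3 := abs_add_le (f1 k * g1 k) (f k * g2 k)
    linarith

lemma PDec.const (a : ℝ) : PDec 0 (fun _ => a) :=
  ⟨1, |a|, fun _ => 0, fun _ => 0, le_rfl, abs_nonneg _, fun k _ =>
    ⟨hasDerivAt_const _ _, hasDerivAt_const _ _, by simp, by simp, by simp⟩⟩

lemma PDec.cos : PDec 0 (fun k => Real.cos k) :=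
  ⟨1, 1, fun k => -Real.sin k, fun k => -Real.cos k, le_rfl, zero_le_one, fun k _ =>
    ⟨Real.hasDerivAt_cos _, (Real.hasDerivAt_sin _).neg, by simpa using Real.abs_cos_le_one k,
      by simpa using Real.abs_sin_le_one k, by simpa using Real.abs_cos_le_one k⟩⟩

lemma PDec.inv : PDec 1 (fun k => k⁻¹) := by
  refine ⟨1, 2, fun k => -(k ^ 2)⁻¹, fun k => 2 * (k ^ 3)⁻¹, le_rfl, zero_le_two, fun k hk => ?_⟩
  have hk0 : k ≠ 0 := by rintro rfl; simp at hk; linarith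
  have hx : |k|⁻¹ ≤ 1 := inv_le_one_of_one_le₀ hk.le
  have hx0 : 0 ≤ |k|⁻¹ := by positivity
  refine ⟨hasDerivAt_inv hk0, ?_, ?_, ?_, ?_⟩
  · have := ((hasDerivAt_pow 2 k).inv (pow_ne_zero 2 hk0)).neg
    convert! this using 1
    field_simp
    norm_num
  · rw [abs_inv]; linarith
  · rw [abs_neg, abs_inv, abs_pow, ← inv_pow]; nlinarith
  · rw [abs_mul, abs_inv, abs_pow, ← inv_pow, abs_two, pow_one]
    have : |k|⁻¹ ^ 3 ≤ |k|⁻¹ ^ 1 := pow_le_pow_of_le_one hx0 hx (by norm_num)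
    linarith

lemma PDec.recip {f : ℝ → ℝ} (hf : PDec 0 f) {η K0 : ℝ} (hη : 0 < η)
    (hb : ∀ k, K0 < |k| → η ≤ |f k|) : PDec 0 (fun k => (f k)⁻¹) := by
  obtain ⟨K, C, f1, f2, hK, hC, H⟩ := hf
  refine ⟨max K K0, η⁻¹ + C * (η⁻¹) ^ 2 + 2 * C ^ 2 * (η⁻¹) ^ 3,
    fun k => - f1 k / f k ^ 2, fun k => (- f2 k * f k ^ 2 - (- f1 k) * (2 * f k * f1 k)) /
      (f k ^ 2) ^ 2, le_max_of_le_left hK, by positivity, fun k hk => ?_⟩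
  obtain ⟨a, b, c, d, e⟩ := H k ((le_max_left _ _).trans_lt hk)
  have hbk := hb k ((le_max_right _ _).trans_lt hk)
  have hf0 : f k ≠ 0 := by intro h; rw [h, abs_zero] at hbk; linarith
  simp only [pow_zero, mul_one] at c d e ⊢
  have hi : |f k|⁻¹ ≤ η⁻¹ := inv_anti₀ hη hbk
  have hi0 : 0 ≤ |f k|⁻¹ := by positivity
  have hη0 : 0 ≤ η⁻¹ := by positivity
  have t1 : 0 ≤ C * (η⁻¹) ^ 2 := by positivity
  have t2 : 0 ≤ 2 * C ^ 2 * (η⁻¹) ^ 3 := by positivity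
  refine ⟨a.inv hf0, ?_, ?_, ?_, ?_⟩
  · have := b.neg.div (a.pow 2) (pow_ne_zero 2 hf0)
    convert! this using 1
    simp
  · rw [abs_inv]; linarith
  · have : |-f1 k / f k ^ 2| = |f1 k| * (|f k|⁻¹) ^ 2 := by
      rw [abs_div, abs_neg, abs_pow, inv_pow]; rfl
    rw [this]
    have : |f1 k| * (|f k|⁻¹) ^ 2 ≤ C * (η⁻¹) ^ 2 := by gcongr
    linarith
  · have e1 : (- f2 k * f k ^ 2 - (- f1 k) * (2 * f k * f1 k)) / (f k ^ 2) ^ 2 =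
        - f2 k * ((f k)⁻¹) ^ 2 + 2 * f1 k ^ 2 * ((f k)⁻¹) ^ 3 := by
      field_simp; ring
    rw [e1]
    refine (abs_add_le _ _).trans ?_
    rw [abs_mul, abs_mul, abs_mul, abs_neg, abs_pow, abs_pow, abs_pow, abs_inv, abs_two]
    have h1 : |f2 k| * (|f k|⁻¹) ^ 2 ≤ C * (η⁻¹) ^ 2 := by gcongr
    have h2 : 2 * |f1 k| ^ 2 * (|f k|⁻¹) ^ 3 ≤ 2 * C ^ 2 * (η⁻¹) ^ 3 := by gcongr
    linarith

lemma int_of_decay {f : ℝ → ℝ} (hf : Continuous f) {K C : ℝ} (hK : 1 ≤ K) (hC : 0 ≤ C)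
    (h : ∀ k, K < |k| → |f k| ≤ C * (|k|⁻¹) ^ 2) : Integrable f := by
  obtain ⟨B, hB⟩ := (isCompact_Icc (a := -K) (b := K)).exists_bound_of_continuousOn
    hf.continuousOn
  have hB0 : 0 ≤ B := (norm_nonneg _).trans (hB 0 ⟨by linarith, by linarith⟩)
  refine Integrable.mono' (integrable_inv_one_add_sq.const_mul (B * (1 + K ^ 2) + 2 * C))
    hf.aestronglyMeasurable (ae_of_all _ fun k => ?_)
  rw [← div_eq_mul_inv, le_div_iff₀ (by positivity), Real.norm_eq_abs]
  by_cases hk : K < |k|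
  · have h1 := h k hk
    have hk0 : 0 < |k| := by linarith
    have h2 : 1 + k ^ 2 ≤ 2 * |k| ^ 2 := by rw [sq_abs]; nlinarith [sq_abs k]
    calc |f k| * (1 + k ^ 2) ≤ C * (|k|⁻¹) ^ 2 * (2 * |k| ^ 2) := by gcongr
      _ = 2 * C := by field_simp
      _ ≤ _ := by nlinarith [mul_nonneg hB0 (by positivity : 0 ≤ 1 + K ^ 2)]
  · push Not at hk
    have h1 := hB k (abs_le.1 hk)
    have h2 : k ^ 2 ≤ K ^ 2 := by rw [← sq_abs]; gcongr
    rw [Real.norm_eq_abs] at h1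
    calc |f k| * (1 + k ^ 2) ≤ B * (1 + K ^ 2) := by gcongr
      _ ≤ _ := by linarith

lemma dslope_an {f : ℝ → ℝ} (hf : ∀ x, AnalyticAt ℝ f x) (a x : ℝ) :
    AnalyticAt ℝ (dslope f a) x := by
  by_cases h : x = a
  · subst h
    obtain ⟨p, hp⟩ := hf x
    exact ⟨_, hp.has_fpower_series_dslope_fslope⟩
  · have : AnalyticAt ℝ (slope f a) x := by
      have e : slope f a = fun y => (y - a)⁻¹ * (f y - f a) := by
        ext y; simp [slope]
      rw [e]
      exact ((analyticAt_id.sub analyticAt_const).inv (sub_ne_zero.2 h)).mul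
        ((hf x).sub analyticAt_const)
    refine this.congr ?_
    filter_upwards [isOpen_ne.mem_nhds h] with y hy
    rw [dslope_of_ne _ hy]

lemma symb_an (x : ℝ) : AnalyticAt ℝ symb x := by
  have e : symb = fun k => dslope Real.sin 0 (k / 2) := by
    ext k
    rw [← Real.sinc_eq_dslope, Real.sinc_apply]
    simp [symb]
  rw [e]
  exact (dslope_an (fun x => Real.analyticAt_sin) 0 (x/2)).comp_of_eq
    (analyticAt_id.div_const) rfl

lemma dslope_mul {f : ℝ → ℝ} {a : ℝ} (h : f a = 0) (x : ℝ) : (x - a) * dslope f a x = f x := by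
  have := sub_smul_dslope f a x
  rw [h] at this
  simpa using this

lemma quot_an {n m : ℝ → ℝ} (hn : ∀ x, AnalyticAt ℝ n x) (hm : ∀ x, AnalyticAt ℝ m x) {q : ℝ}
    (hq : 0 < q) (n1 : n q = 0) (n2 : n (-q) = 0) (m1 : m q = 0) (m2 : m (-q) = 0)
    (d1 : deriv m q ≠ 0) (d2 : deriv m (-q) ≠ 0) (hr : ∀ k, k ≠ q → k ≠ -q → m k ≠ 0) :
    ∃ h : ℝ → ℝ, (∀ x, AnalyticAt ℝ h x) ∧ ∀ k, m k * h k = n k := by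
  have hne : -q ≠ q := by linarith
  have an : ∀ f : ℝ → ℝ, (∀ x, AnalyticAt ℝ f x) → ∀ x, AnalyticAt ℝ (dslope (dslope f q) (-q)) x :=
    fun f hf => dslope_an (dslope_an hf q) (-q)
  have fac : ∀ f : ℝ → ℝ, f q = 0 → f (-q) = 0 → ∀ x,
      (x - q) * ((x - -q) * dslope (dslope f q) (-q) x) = f x := by
    intro f h1 h2 x
    have h3 : dslope f q (-q) = 0 := by
      have := dslope_mul h1 (-q)
      rw [h2] at this
      exact (mul_eq_zero.1 this).resolve_left (by linarith)
    rw [dslope_mul h3, dslope_mul h1]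
  have mz : ∀ x, dslope (dslope m q) (-q) x ≠ 0 := by
    intro x hx
    have hx' := fac m m1 m2 x
    rw [hx] at hx'
    have hmx : m x = 0 := by linarith
    have hd : (x = q ∨ x = -q) → deriv m x = 0 := by
      intro hor
      have hD := (an m hm x).differentiableAt.hasDerivAt
      have h1 := ((hasDerivAt_id x).sub_const q).mul
        (((hasDerivAt_id x).sub_const (-q)).mul hD)
      have h2 := h1.congr_of_eventuallyEq (f₁ := m)
        (Eventually.of_forall fun y => (fac m m1 m2 y).symm)
      rw [h2.deriv]
      simp only [Pi.mul_apply, hx, id]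
      rcases hor with h | h <;> rw [h] <;> ring
    by_cases hxq : x = q
    · exact d1 (hxq ▸ hd (Or.inl hxq))
    · by_cases hxq' : x = -q
      · exact d2 (hxq' ▸ hd (Or.inr hxq'))
      · exact hr x hxq hxq' hmx
  refine ⟨fun x => dslope (dslope n q) (-q) x / dslope (dslope m q) (-q) x,
    fun x => (an n hn x).div (an m hm x) (mz x), fun k => ?_⟩
  rw [← fac n n1 n2 k, ← fac m m1 m2 k]
  have := mz k
  field_simp

lemma symbol_quot {c kc : ℝ} (hc0 : 0 < c) (hkc : 0 < kc)
    (ha : symb kc = c) (hm' : deriv (msymb c) kc ≠ 0)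
    (hroots : ∀ k : ℝ, k ≠ kc → k ≠ -kc → msymb c k ≠ 0) :
    ∃ h h1 h2 : ℝ → ℝ, (∀ k, h (-k) = h k) ∧ (∀ k, HasDerivAt h (h1 k) k) ∧
      (∀ k, HasDerivAt h1 (h2 k) k) ∧ Integrable h ∧ Integrable h1 ∧ Integrable h2 ∧
      ∀ k, msymb c k * h k = symb k ^ 2 * (kc ^ 2 / c ^ 2 - 1 / c ^ 4 * (2 - 2 * Real.cos k)) := by
  set n : ℝ → ℝ := fun k => symb k ^ 2 * (kc ^ 2 / c ^ 2 - 1 / c ^ 4 * (2 - 2 * Real.cos k))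
    with hn
  have nan : ∀ x, AnalyticAt ℝ n x := fun x =>
    ((symb_an x).pow 2).mul (analyticAt_const.sub (analyticAt_const.mul (analyticAt_const.sub
      (analyticAt_const.mul Real.analyticAt_cos))))
  have man : ∀ x, AnalyticAt ℝ (msymb c) x := fun x => ((symb_an x).pow 2).sub analyticAt_const
  have meven : ∀ k, msymb c (-k) = msymb c k := fun k => by simp [msymb, symb_neg]
  have neven : ∀ k, n (-k) = n k := fun k => by simp [hn, symb_neg]
  have m1 : msymb c kc = 0 := by simp [msymb, ha]
  have n1 : n kc = 0 := by
    simp only [hn]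
    rw [← symb_sq, ha]
    field_simp
    ring
  have d2 : deriv (msymb c) (-kc) ≠ 0 := by
    have e : (fun k => msymb c (-k)) = msymb c := funext meven
    have h1 := deriv_comp_neg (msymb c) kc
    rw [e] at h1
    intro h2
    rw [h2] at h1
    exact hm' (by linarith)
  obtain ⟨H, Han, Hm⟩ := quot_an nan man hkc n1 (by rw [neven]; exact n1) m1
    (by rw [meven]; exact m1) hm' d2 hroots
  set h : ℝ → ℝ := fun k => (H k + H (-k)) / 2 with hh
  have han : ∀ x, AnalyticAt ℝ h x := fun x =>
    ((Han x).add ((Han (-x)).comp_of_eq analyticAt_id.neg rfl)).div_const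
  have hprod : ∀ k, msymb c k * h k = n k := by
    intro k
    have e1 := Hm k
    have e2 := Hm (-k)
    rw [meven, neven] at e2
    simp only [hh]
    linarith
  have han1 : ∀ x, AnalyticAt ℝ (deriv h) x := fun x => (han x).deriv
  have han2 : ∀ x, AnalyticAt ℝ (deriv (deriv h)) x := fun x => (han1 x).deriv
  have cont : ∀ f : ℝ → ℝ, (∀ x, AnalyticAt ℝ f x) → Continuous f := fun f hf =>
    continuous_iff_continuousAt.2 fun x => (hf x).continuousAt
  -- decay
  have s2 : PDec 0 (fun k => 2 + (-2) * Real.cos k) :=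
    (PDec.const 2).add ((PDec.const (-2)).mul PDec.cos)
  have a2 : PDec 2 (fun k => symb k ^ 2) := by
    refine ((PDec.inv.mul PDec.inv).mul s2).congr 0 fun k hk => ?_
    have hk0 : k ≠ 0 := by rintro rfl; simp at hk
    have := symb_sq k
    field_simp
    linarith
  have nd : PDec 2 n := by
    refine (a2.mul ((PDec.const (kc ^ 2 / c ^ 2)).add ((PDec.const (-(1 / c ^ 4))).mul s2))).congr 0
      fun k _ => ?_
    simp only [hn]; ring
  have md : PDec 0 (msymb c) :=
    (a2.mono.add (PDec.const (-c ^ 2))).congr 0 fun k _ => by simp only [msymb]; ring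
  have mb : ∀ k, 4 / c < |k| → c ^ 2 / 2 ≤ |msymb c k| := by
    intro k hk
    have h1 := symb_sq k
    have h2 := Real.neg_one_le_cos k
    rw [div_lt_iff₀ hc0] at hk
    have h3 : 16 < k ^ 2 * c ^ 2 := by rw [← sq_abs]; nlinarith
    have hk2 : 0 < k ^ 2 := by
      by_contra hneg
      have : k ^ 2 = 0 := le_antisymm (not_lt.1 hneg) (sq_nonneg k)
      rw [this] at h3; norm_num at h3
    have h4 : symb k ^ 2 ≤ c ^ 2 / 2 := by
      by_contra hneg
      push Not at hneg
      nlinarith [mul_lt_mul_of_pos_left hneg hk2]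
    have : c ^ 2 / 2 ≤ -(msymb c k) := by simp only [msymb]; linarith
    exact this.trans (neg_le_abs _)
  have hd : PDec 2 h := by
    refine (nd.mul (md.recip (by positivity) mb)).congr (4 / c) fun k hk => ?_
    have h1 := mb k hk
    have h2 : msymb c k ≠ 0 := by
      intro h0; rw [h0, abs_zero] at h1
      have : 0 < c ^ 2 / 2 := by positivity
      linarith
    rw [← hprod]; field_simp
  obtain ⟨K, C, f1, f2, hK, hC, HH⟩ := hd
  have e1 : ∀ k, K < |k| → deriv h k = f1 k := fun k hk => (HH k hk).1.deriv
  have e2 : ∀ k, K < |k| → deriv (deriv h) k = f2 k := fun k hk => by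
    have : deriv h =ᶠ[𝓝 k] f1 := by
      filter_upwards [open_far K hk] with y hy using e1 y hy
    rw [this.deriv_eq, (HH k hk).2.1.deriv]
  refine ⟨h, deriv h, deriv (deriv h), fun k => by simp only [hh, neg_neg]; ring,
    fun k => (han k).differentiableAt.hasDerivAt, fun k => (han1 k).differentiableAt.hasDerivAt,
    int_of_decay (cont _ han) hK hC fun k hk => (HH k hk).2.2.1,
    int_of_decay (cont _ han1) hK hC fun k hk => ?_,
    int_of_decay (cont _ han2) hK hC fun k hk => ?_, hprod⟩
  · rw [e1 k hk]; exact (HH k hk).2.2.2.1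
  · rw [e2 k hk]; exact (HH k hk).2.2.2.2

lemma kernel_exists {c kc : ℝ} (hc0 : 0 < c) (hkc : 0 < kc)
    (ha : symb kc = c) (hm' : deriv (msymb c) kc ≠ 0)
    (hroots : ∀ k : ℝ, k ≠ kc → k ≠ -kc → msymb c k ≠ 0) :
    ∃ v : ℝ → ℝ, Continuous v ∧ Integrable v ∧
      ∀ x, Mop c v x = pComb (kc ^ 2 / c ^ 2) (1 / c ^ 4) (Aop pBox) x := by
  obtain ⟨h, h1, h2, he, d1, d2, i0, i1, i2, hq⟩ := symbol_quot hc0 hkc ha hm' hroots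
  obtain ⟨v, vc, vi, vcos, vsin⟩ := fourier_exists he d1 d2 i0 i1 i2
  refine ⟨v, vc, vi, fun x => ?_⟩
  have iA := Aop_int (Aop_int vi)
  have iM : Integrable (Mop c v) := iA.sub (vi.const_mul _)
  have cM : Continuous (Mop c v) :=
    (Aop_cont_of_int (Aop_int vi)).sub (continuous_const.mul vc)
  have it := Aop_int pBox_int
  set Z := pComb (kc ^ 2 / c ^ 2) (1 / c ^ 4) (Aop pBox) with hZ
  have iZ : Integrable Z := pComb_int it
  have cZ : Continuous Z := pComb_cont (Aop_cont_of_int pBox_int)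
  have := fourier_unique (F := fun x => Mop c v x - Z x) (iM.sub iZ) (cM.sub cZ) ?_ ?_ x
  · linarith
  · intro k
    have e : ∀ x, (Mop c v x - Z x) * Real.cos (k * x) = (Aop (Aop v) x * Real.cos (k * x)
        - c ^ 2 * (v x * Real.cos (k * x))) - Z x * Real.cos (k * x) := by
      intro x; simp only [Mop]; ring
    simp_rw [e]
    have i3 : Integrable (fun x => Aop (Aop v) x * Real.cos (k * x)
        - c ^ 2 * (v x * Real.cos (k * x))) :=
      (int_mul_cos iA k).sub ((int_mul_cos vi k).const_mul _)
    rw [integral_sub i3 (int_mul_cos iZ k),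
      integral_sub (int_mul_cos iA k) ((int_mul_cos vi k).const_mul _), integral_const_mul,
      int_cos (Aop_int vi), int_cos vi, vcos, hZ, pComb_tent_cos, ← hq, msymb]
    ring
  · intro k
    have e : ∀ x, (Mop c v x - Z x) * Real.sin (k * x) = (Aop (Aop v) x * Real.sin (k * x)
        - c ^ 2 * (v x * Real.sin (k * x))) - Z x * Real.sin (k * x) := by
      intro x; simp only [Mop]; ring
    simp_rw [e]
    have i3 : Integrable (fun x => Aop (Aop v) x * Real.sin (k * x)
        - c ^ 2 * (v x * Real.sin (k * x))) :=
      (int_mul_sin iA k).sub ((int_mul_sin vi k).const_mul _)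
    rw [integral_sub i3 (int_mul_sin iZ k),
      integral_sub (int_mul_sin iA k) ((int_mul_sin vi k).const_mul _), integral_const_mul,
      int_sin (Aop_int vi), int_sin vi, vsin, hZ, pComb_tent_sin]
    ring


lemma conv_L1 {v G : ℝ → ℝ} (hv : Integrable v) (hG : Integrable G) :
    Integrable (fun x => ∫ y, v y * G (x - y)) ∧
      ∫ x, |∫ y, v y * G (x - y)| ≤ (∫ y, |v y|) * ∫ y, |G y| := by
  have key : ∀ {v G : ℝ → ℝ}, Integrable v → Integrable G →
      Integrable (fun p : ℝ × ℝ => v p.2 * G (p.1 - p.2)) (volume.prod volume) := by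
    intro v G hv hG
    simpa using hv.convolution_integrand (ContinuousLinearMap.mul ℝ ℝ) hG
  have i1 := key hv hG
  have i2 := key hv.norm hG.norm
  simp only [Real.norm_eq_abs] at i2
  refine ⟨i1.integral_prod_left, ?_⟩
  calc ∫ x, |∫ y, v y * G (x - y)| ≤ ∫ x, ∫ y, |v y| * |G (x - y)| := by
        refine integral_mono i1.integral_prod_left.norm i2.integral_prod_left fun x => ?_
        refine (abs_integral_le_integral_abs).trans (le_of_eq ?_)
        congr 1; ext y; exact abs_mul _ _
    _ = ∫ y, ∫ x, |v y| * |G (x - y)| := integral_integral_swap i2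
    _ = ∫ y, |v y| * ∫ x, |G x| := by
        congr 1; ext y
        rw [integral_const_mul, integral_sub_right_eq_self (fun x => |G x|)]
    _ = _ := by rw [integral_mul_const]

lemma ode_asymp {k : ℝ} (hk : 0 < k) {T T1 f : ℝ → ℝ} (hf : Integrable f)
    (h1 : ∀ x, HasDerivAt T (T1 x) x) (h2 : ∀ x, HasDerivAt T1 (f x - k ^ 2 * T x) x) :
    ∃ α β : ℝ, Tendsto (fun x => T x - α * Real.cos (k * x) - β * Real.sin (k * x)) atTop (𝓝 0) ∧
      (α = 0 → β = 0 → ∀ x, |T1 x| ≤ 2 * ∫ y, |f y|) := by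
  have dc : ∀ x, HasDerivAt (fun x => Real.cos (k * x)) (-Real.sin (k * x) * (k * 1)) x := fun x =>
    (Real.hasDerivAt_cos (k * x)).comp x ((hasDerivAt_id x).const_mul k)
  have ds : ∀ x, HasDerivAt (fun x => Real.sin (k * x)) (Real.cos (k * x) * (k * 1)) x := fun x =>
    (Real.hasDerivAt_sin (k * x)).comp x ((hasDerivAt_id x).const_mul k)
  set P : ℝ → ℝ := fun x => T x * Real.cos (k * x) - T1 x * Real.sin (k * x) / k with hP
  set Q : ℝ → ℝ := fun x => T x * Real.sin (k * x) + T1 x * Real.cos (k * x) / k with hQ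
  have dP : ∀ x, HasDerivAt P (-(f x * Real.sin (k * x)) / k) x := by
    intro x
    have := ((h1 x).mul (dc x)).sub (((h2 x).mul (ds x)).div_const k)
    convert! this using 1
    field_simp; ring
  have dQ : ∀ x, HasDerivAt Q ((f x * Real.cos (k * x)) / k) x := by
    intro x
    have := ((h1 x).mul (ds x)).add (((h2 x).mul (dc x)).div_const k)
    convert! this using 1
    field_simp; ring
  have iP : Integrable (fun x => -(f x * Real.sin (k * x)) / k) := (int_mul_sin hf k).neg.div_const k
  have iQ : Integrable (fun x => (f x * Real.cos (k * x)) / k) := (int_mul_cos hf k).div_const k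
  have tP := tendsto_limUnder_of_hasDerivAt_of_integrableOn_Ioi (a := 0) (f := P)
    (fun x _ => dP x) iP.integrableOn
  have tQ := tendsto_limUnder_of_hasDerivAt_of_integrableOn_Ioi (a := 0) (f := Q)
    (fun x _ => dQ x) iQ.integrableOn
  set α := limUnder atTop P
  set β := limUnder atTop Q
  have sc : ∀ x, Real.sin (k * x) ^ 2 + Real.cos (k * x) ^ 2 = 1 := fun x =>
    Real.sin_sq_add_cos_sq _
  have eT : ∀ x, T x = P x * Real.cos (k * x) + Q x * Real.sin (k * x) := by
    intro x
    simp only [hP, hQ]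
    linear_combination (-(T x)) * sc x
  have eT1 : ∀ x, T1 x = k * (Q x * Real.cos (k * x) - P x * Real.sin (k * x)) := by
    intro x
    simp only [hP, hQ]
    field_simp
    linear_combination (-(T1 x)) * sc x
  refine ⟨α, β, ?_, ?_⟩
  · have z1 : Tendsto (fun x => (P x - α) * Real.cos (k * x)) atTop (𝓝 0) := by
      refine (tendsto_sub_nhds_zero_iff.2 tP).zero_mul_isBoundedUnder_le ?_
      exact isBoundedUnder_of ⟨1, fun x => Real.abs_cos_le_one _⟩
    have z2 : Tendsto (fun x => (Q x - β) * Real.sin (k * x)) atTop (𝓝 0) := by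
      refine (tendsto_sub_nhds_zero_iff.2 tQ).zero_mul_isBoundedUnder_le ?_
      exact isBoundedUnder_of ⟨1, fun x => Real.abs_sin_le_one _⟩
    have := z1.add z2
    rw [add_zero] at this
    refine this.congr fun x => ?_
    rw [eT x]; ring
  · intro ha hb x
    rw [ha] at tP
    rw [hb] at tQ
    have bd : ∀ (R : ℝ → ℝ) (r : ℝ → ℝ), (∀ x, HasDerivAt R (r x) x) → Integrable r →
        Tendsto R atTop (𝓝 0) → (∀ y, |r y| ≤ |f y| / k) → |R x| ≤ (∫ y, |f y|) / k := by
      intro R r hd hi ht hb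
      have e := integral_Ioi_of_hasDerivAt_of_tendsto' (a := x) (fun y _ => hd y)
        hi.integrableOn ht
      have : |R x| = |∫ y in Set.Ioi x, r y| := by rw [e, zero_sub, abs_neg]
      rw [this]
      calc |∫ y in Set.Ioi x, r y| ≤ ∫ y in Set.Ioi x, |r y| := abs_integral_le_integral_abs
        _ ≤ ∫ y, |r y| := setIntegral_le_integral hi.norm (ae_of_all _ fun y => abs_nonneg _)
        _ ≤ ∫ y, |f y| / k := integral_mono hi.norm (hf.norm.div_const k) hb
        _ = _ := integral_div _ _
    have bP := bd P _ dP iP tP (fun y => by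
      rw [abs_div, abs_neg, abs_mul, abs_of_pos hk]
      gcongr
      exact mul_le_of_le_one_right (abs_nonneg _) (Real.abs_sin_le_one _))
    have bQ := bd Q _ dQ iQ tQ (fun y => by
      rw [abs_div, abs_mul, abs_of_pos hk]
      gcongr
      exact mul_le_of_le_one_right (abs_nonneg _) (Real.abs_cos_le_one _))
    rw [le_div_iff₀ hk] at bP bQ
    rw [eT1 x, abs_mul, abs_of_pos hk]
    have t := abs_sub (Q x * Real.cos (k * x)) (P x * Real.sin (k * x))
    rw [abs_mul, abs_mul] at t
    have u1 := mul_le_of_le_one_right (abs_nonneg (Q x)) (Real.abs_cos_le_one (k * x))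
    have u2 := mul_le_of_le_one_right (abs_nonneg (P x)) (Real.abs_sin_le_one (k * x))
    nlinarith

lemma linear_part {c kc : ℝ} (hc0 : 0 < c) {v : ℝ → ℝ} (vi : Integrable v)
    (hv : ∀ x, Mop c v x = pComb (kc ^ 2 / c ^ 2) (1 / c ^ 4) (Aop pBox) x)
    {S g : ℝ → ℝ} {μ C : ℝ} (hS : Continuous S) (hSb : ∀ x, |S x| ≤ C) (hg : Continuous g)
    (gi : Integrable g) {D : ℝ} (hgb : ∀ x, |g x| ≤ D)
    (heq : ∀ x, Mop c S x = Aop (Aop g) x + μ) :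
    ∃ (f S1 : ℝ → ℝ) (b : ℝ), Integrable f ∧ (∀ x, HasDerivAt S (S1 x) x) ∧
      (∀ x, HasDerivAt S1 (f x + b - kc ^ 2 * S x) x) ∧
      ∫ x, |f x| ≤ ((∫ y, |v y|) + (|kc ^ 2 / c ^ 2| + 4 * |1 / c ^ 4|)
        + (|(0:ℝ)| + 4 * |1 / c ^ 2|)) * ∫ x, |g x| := by
  have iA := Aop_int (Aop_int gi)
  have cA := Aop_cont_of_cont (Aop_cont_of_cont hg)
  have bA : ∀ x, |Aop (Aop g) x| ≤ D := Aop_bdd (Aop_bdd hgb)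
  have LA : ∫ x, |Aop (Aop g) x| ≤ ∫ x, |g x| := (Aop_L1 (Aop_int gi)).trans (Aop_L1 gi)
  obtain ⟨iW, LW⟩ := conv_L1 vi iA
  set W : ℝ → ℝ := fun x => ∫ y, v y * Aop (Aop g) (x - y) with hW
  set p := kc ^ 2 / c ^ 2 with hp
  set q := 1 / c ^ 4 with hq
  have iP : Integrable (pComb p q (Aop (Aop g))) := pComb_int iA
  have iG : Integrable (pComb 0 (1 / c ^ 2) g) := pComb_int gi
  -- the key identity
  have key : ∀ x, pComb p q (Aop (Aop S)) x = W x + μ * ∫ y, v y := by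
    intro x
    rw [← pComb_tent_conv hS hSb]
    simp_rw [← hv]
    have hSx : Continuous (fun y => S (x - y)) := by fun_prop
    have e1 : ∀ y, Mop c v y * S (x - y) = Aop (Aop v) y * S (x - y) - c ^ 2 * (v y * S (x - y)) := by
      intro y; simp only [Mop]; ring
    simp_rw [e1]
    rw [integral_sub (int_mul_bdd (Aop_int (Aop_int vi)) hSx (fun y => hSb _))
      ((int_mul_bdd vi hSx (fun y => hSb _)).const_mul _), Aop2_conv vi hS hSb,
      integral_const_mul, hW, ← integral_const_mul, ← integral_const_mul,
      ← integral_sub, ← integral_add]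
    · congr 1; ext y
      have := heq (x - y)
      simp only [Mop] at this
      linear_combination (v y) * this
    · exact int_mul_bdd vi (G := fun y => Aop (Aop g) (x - y)) (by fun_prop) (fun y => bA _)
    · exact vi.const_mul _
    · exact int_mul_bdd vi (G := fun y => Aop (Aop S) (x - y))
        ((Aop_cont_of_cont (Aop_cont_of_cont hS)).comp (by fun_prop))
        (fun y => Aop_bdd (Aop_bdd hSb) _)
    · exact (int_mul_bdd vi hSx (fun y => hSb _)).const_mul _
  set F : ℝ → ℝ := fun x => S x - g x with hF
  have cF : Continuous F := hS.sub hg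
  have cAF := Aop_cont_of_cont cF
  have SF : S = fun x => (Aop (Aop F) x - μ) / c ^ 2 := by
    ext x
    have h1 := heq x
    rw [hF, Aop_sub hS hg, Aop_sub (Aop_cont_of_cont hS) (Aop_cont_of_cont hg)]
    simp only [Mop] at h1 ⊢
    field_simp
    linarith
  refine ⟨fun x => W x - pComb p q (Aop (Aop g)) x - pComb 0 (1 / c ^ 2) g x,
    fun x => (Aop F (x + 1/2) - Aop F (x - 1/2)) / c ^ 2, μ * (∫ y, v y) - p * μ,
    (iW.sub iP).sub iG, fun x => ?_, fun x => ?_, ?_⟩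
  · have := ((Aop_hasDerivAt cAF x).sub_const μ).div_const (c ^ 2)
    rw [← SF] at this
    exact this
  · have d1 := (Aop_hasDerivAt cF (x + 1/2)).comp_add_const x (1/2)
    have d2 := (Aop_hasDerivAt cF (x - 1/2)).comp_sub_const x (1/2)
    have := (d1.sub d2).div_const (c ^ 2)
    convert! this using 1
    have k1 := key x
    have hA : ∀ z, Aop (Aop S) z = c ^ 2 * S z + Aop (Aop g) z + μ := by
      intro z
      have := heq z
      simp only [Mop] at this
      linarith
    simp only [pComb, hA] at k1 ⊢
    rw [show x + 1/2 + 1/2 = x + 1 by ring, show x + 1/2 - 1/2 = x by ring,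
      show x - 1/2 + 1/2 = x by ring, show x - 1/2 - 1/2 = x + (-1) by ring]
    simp only [hF]
    have e1 : W x = p * (c ^ 2 * S x + Aop (Aop g) x + μ) +
      q * (c ^ 2 * S (x + 1) + Aop (Aop g) (x + 1) + μ + (c ^ 2 * S (x + -1) +
        Aop (Aop g) (x + -1) + μ) - 2 * (c ^ 2 * S x + Aop (Aop g) x + μ)) - μ * ∫ y, v y := by
      linarith
    rw [e1, hp, hq]
    field_simp
    ring
  · have L1 := pComb_L1 (p := p) (q := q) iA
    have L2 := pComb_L1 (p := 0) (q := 1 / c ^ 2) gi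
    have hle : ∫ x, |W x - pComb p q (Aop (Aop g)) x - pComb 0 (1 / c ^ 2) g x| ≤
        ∫ x, (|W x| + |pComb p q (Aop (Aop g)) x| + |pComb 0 (1 / c ^ 2) g x|) := by
      refine integral_mono ((iW.sub iP).sub iG).norm ((iW.norm.add iP.norm).add iG.norm) fun x => ?_
      exact (abs_sub _ _).trans (add_le_add_left (abs_sub _ _) _)
    have i5 : Integrable (fun x => |W x| + |pComb p q (Aop (Aop g)) x|) := iW.abs.add iP.abs
    rw [integral_add i5 iG.abs, integral_add iW.abs iP.abs] at hle
    have hv0 : 0 ≤ ∫ y, |v y| := integral_nonneg fun _ => abs_nonneg _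
    have m1 := mul_le_mul_of_nonneg_left LA hv0
    have m2 := mul_le_mul_of_nonneg_left LA (by positivity : 0 ≤ |p| + 4 * |q|)
    linarith


/-- two phase transition waves that cross the spinodal region inside
`[-δ^κ, δ^κ]` either coincide or differ at `x → +∞` by a nontrivial harmonic
oscillation with wave number `k_c` plus a constant. -/
theorem stmt15 (c kc : ℝ) (hc0 : 0 < c) (hc1 : c < 1) (hkc : 0 < kc)
    (ha : symb kc = c) (hm' : deriv (msymb c) kc ≠ 0)
    (hroots : ∀ k : ℝ, k ≠ kc → k ≠ -kc → msymb c k ≠ 0)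
    (Ψ : ℝ → ℝ → ℝ) (CΨ : ℝ) (hA : AssumptionA Ψ CΨ)
    (hI : ∀ δ : ℝ, 0 < δ → Idelta Ψ δ = 0)
    (κ : ℝ) (hκ : 1 / 2 < κ) :
    ∃ δκ : ℝ, 0 < δκ ∧
      ∀ δ : ℝ, 0 < δ → δ < δκ →
        ∀ (R₁ R₂ : ℝ → ℝ) (μ₁ μ₂ : ℝ),
          IsW2inf R₁ → IsW2inf R₂ →
          (∀ x, Mop c R₁ x = Aop (Aop (fun y => deriv (Ψ δ) (R₁ y))) x + μ₁) →
          (∀ x, Mop c R₂ x = Aop (Aop (fun y => deriv (Ψ δ) (R₂ y))) x + μ₂) →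
          R₁ 0 = 0 → R₂ 0 = 0 →
          (∀ x : ℝ, x ≤ -(δ ^ κ) → R₁ x ≤ -δ) → (∀ x : ℝ, δ ^ κ ≤ x → δ ≤ R₁ x) →
          (∀ x : ℝ, x ≤ -(δ ^ κ) → R₂ x ≤ -δ) → (∀ x : ℝ, δ ^ κ ≤ x → δ ≤ R₂ x) →
          ((∀ x, R₁ x = R₂ x) ∨
            ∃ γp αp βp : ℝ, ¬(αp = 0 ∧ βp = 0) ∧
              Tendsto (fun x => R₁ x - R₂ x - αp * (Real.cos (kc * x) - 1)
                - βp * Real.sin (kc * x) - γp) atTop (nhds 0)) := by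
  obtain ⟨v, vc, vi, hv⟩ := kernel_exists hc0 hkc ha hm' hroots
  obtain ⟨hCΨ, hA⟩ := hA
  set Λ : ℝ := (∫ y, |v y|) + (|kc ^ 2 / c ^ 2| + 4 * |1 / c ^ 4|)
        + (|(0:ℝ)| + 4 * |1 / c ^ 2|) with hΛ
  have hΛ0 : 0 ≤ Λ := by
    have : 0 ≤ ∫ y, |v y| := integral_nonneg fun _ => abs_nonneg _
    positivity
  have ht : Tendsto (fun δ : ℝ => 8 * Λ * CΨ * δ ^ (2 * κ - 1)) (𝓝 0) (𝓝 0) := by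
    have h1 : ContinuousAt (fun δ : ℝ => δ ^ (2 * κ - 1)) 0 :=
      Real.continuousAt_rpow_const _ _ (Or.inr (by linarith))
    have h2 := (h1.tendsto).const_mul (8 * Λ * CΨ)
    rw [Real.zero_rpow (by linarith), mul_zero] at h2
    exact h2
  obtain ⟨δκ, hδκ, hball⟩ := Metric.eventually_nhds_iff.1 (ht.eventually (gt_mem_nhds zero_lt_one))
  refine ⟨δκ, hδκ, fun δ hδ hδlt R₁ R₂ μ₁ μ₂ w1 w2 e1 e2 z1 z2 n1 p1 n2 p2 => ?_⟩
  have hsmall : 8 * Λ * CΨ * δ ^ (2 * κ - 1) < 1 :=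
    hball (by rw [Real.dist_eq, sub_zero, abs_of_pos hδ]; exact hδlt)
  obtain ⟨-, hC2, hsgn, hbd, hlip⟩ := hA δ hδ
  set ψ := deriv (Ψ δ) with hψ
  have hψd : ContDiff ℝ 1 ψ := by
    have := (contDiff_succ_iff_deriv (n := 1) (f := Ψ δ) (𝕜 := ℝ)).1 (by simpa [one_add_one_eq_two] using hC2)
    exact this.2.2
  have hψc : Continuous ψ := hψd.continuous
  have hψl : ∀ a b, |ψ a - ψ b| ≤ CΨ / δ * |a - b| := fun a b =>
    Convex.norm_image_sub_le_of_norm_deriv_le (s := Set.univ) (f := ψ)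
      (fun x _ => (hψd.differentiable (by norm_num)) x) (fun x _ => hlip x) convex_univ
      (Set.mem_univ b) (Set.mem_univ a)
  have c1 : Continuous R₁ := w1.1.continuous
  have c2 : Continuous R₂ := w2.1.continuous
  obtain ⟨C1, hC1⟩ := w1.2.1
  obtain ⟨C2, hC2'⟩ := w2.2.1
  set ε := δ ^ κ with hε
  have hε0 : 0 < ε := Real.rpow_pos_of_pos hδ κ
  set S : ℝ → ℝ := fun x => R₁ x - R₂ x with hS
  set g : ℝ → ℝ := fun x => ψ (R₁ x) - ψ (R₂ x) with hg
  have cS : Continuous S := c1.sub c2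
  have cg1 : Continuous (fun x => ψ (R₁ x)) := hψc.comp c1
  have cg2 : Continuous (fun x => ψ (R₂ x)) := hψc.comp c2
  have cg : Continuous g := cg1.sub cg2
  have bS : ∀ x, |S x| ≤ C1 + C2 := fun x =>
    (abs_sub _ _).trans (add_le_add (hC1 x).1 (hC2' x).1)
  have bg : ∀ x, |g x| ≤ CΨ + CΨ := fun x => (abs_sub _ _).trans (add_le_add (hbd _) (hbd _))
  have gz : ∀ x, x ∉ Set.Icc (-ε) ε → g x = 0 := by
    intro x hx
    rw [Set.mem_Icc, not_and_or, not_le, not_le] at hx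
    rcases hx with hx | hx
    · have a1 := n1 x hx.le
      have a2 := n2 x hx.le
      simp only [hg]
      rw [hsgn _ (by rw [abs_of_neg (by linarith)]; linarith),
        hsgn _ (by rw [abs_of_neg (by linarith)]; linarith),
        Real.sign_of_neg (by linarith), Real.sign_of_neg (by linarith), sub_self]
    · have a1 := p1 x hx.le
      have a2 := p2 x hx.le
      simp only [hg]
      rw [hsgn _ (by rw [abs_of_pos (by linarith)]; linarith),
        hsgn _ (by rw [abs_of_pos (by linarith)]; linarith),
        Real.sign_of_pos (by linarith), Real.sign_of_pos (by linarith), sub_self]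
  have gi : Integrable g :=
    cg.integrable_of_hasCompactSupport (HasCompactSupport.intro isCompact_Icc gz)
  have heq : ∀ x, Mop c S x = Aop (Aop g) x + (μ₁ - μ₂) := by
    intro x
    have h1 := e1 x
    have h2 := e2 x
    simp only [Mop] at h1 h2 ⊢
    rw [hS, hg, Aop_sub c1 c2, Aop_sub (Aop_cont_of_cont c1) (Aop_cont_of_cont c2),
      Aop_sub cg1 cg2, Aop_sub (Aop_cont_of_cont cg1) (Aop_cont_of_cont cg2)]
    simp only
    linarith
  obtain ⟨f, S1, b, fi, dS, dS1, fL⟩ := linear_part hc0 vi hv cS bS cg gi bg heq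
  rw [← hΛ] at fL
  obtain ⟨α, β, hlim, hzero⟩ := ode_asymp hkc (T := fun x => S x - b / kc ^ 2) fi
    (fun x => (dS x).sub_const _) (fun x => by
      convert! dS1 x using 1
      field_simp; ring)
  by_cases hαβ : α = 0 ∧ β = 0
  · left
    have hb := hzero hαβ.1 hαβ.2
    set G := ∫ x, |g x| with hG
    have hG0 : 0 ≤ G := integral_nonneg fun _ => abs_nonneg _
    have S0 : S 0 = 0 := by simp [hS, z1, z2]
    have Sl : ∀ x, |S x| ≤ 2 * (Λ * G) * |x| := by
      intro x
      have := Convex.norm_image_sub_le_of_norm_hasDerivWithin_le (s := Set.univ) (f := S)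
        (C := 2 * (Λ * G)) (fun y _ => (dS y).hasDerivWithinAt)
        (fun y _ => (hb y).trans (by linarith)) convex_univ (Set.mem_univ 0) (Set.mem_univ x)
      simpa [S0] using this
    have gl : ∀ x ∈ Set.Icc (-ε) ε, ‖|g x|‖ ≤ CΨ / δ * (2 * (Λ * G) * ε) := by
      intro x hx
      rw [norm_abs_eq_norm, Real.norm_eq_abs]
      refine (hψl _ _).trans ?_
      have h1 : |x| ≤ ε := abs_le.2 hx
      have h2 := Sl x
      gcongr
      exact h2.trans (by gcongr)
    have GG : G ≤ CΨ / δ * (2 * (Λ * G) * ε) * (2 * ε) := by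
      have h1 : ∫ x in Set.Icc (-ε) ε, |g x| = G :=
        setIntegral_eq_integral_of_forall_compl_eq_zero fun x hx => by rw [gz x hx, abs_zero]
      have h2 := norm_setIntegral_le_of_norm_le_const (μ := volume) (s := Set.Icc (-ε) ε)
        (by simp) gl
      rw [h1, Real.norm_eq_abs, abs_of_nonneg hG0, Real.volume_real_Icc_of_le (by linarith)] at h2
      calc G ≤ _ := h2
        _ = _ := by ring
    have hpow : ε * ε / δ = δ ^ (2 * κ - 1) := by
      rw [hε, Real.rpow_sub hδ, Real.rpow_one, two_mul, Real.rpow_add hδ]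
    have GG2 : G ≤ (4 * Λ * CΨ * δ ^ (2 * κ - 1)) * G := by
      rw [← hpow]
      calc G ≤ _ := GG
        _ = _ := by ring
    have hG1 : G = 0 := by
      have : 0 ≤ G * (8 * Λ * CΨ * δ ^ (2 * κ - 1)) := by positivity
      nlinarith
    intro x
    have := Sl x
    rw [hG1] at this
    simp only [mul_zero, zero_mul] at this
    have h0 : S x = 0 := abs_eq_zero.1 (le_antisymm this (abs_nonneg _))
    simp only [hS] at h0
    linarith
  · right
    refine ⟨b / kc ^ 2 + α, α, β, hαβ, hlim.congr fun x => ?_⟩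
    simp only [hS]; ring
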